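/- Let Φ, B ∈ M(ℂ^n) be density matrices, S ∈ M(ℂ^n) any matrix, and τ ≥ 0, δ ≥ 0, r ≥ 1. Assume ‖B − Φ‖_∞ ≤ 2τ and ‖S − Φ‖₂ ≤ ‖B − Φ‖₂, and assume that Φ or B is δ-almost rank r. Then ‖S − Φ‖₂² ≤ 2r (δ + 2τ)². -/

import Mathlib

noncomputable section
open Matrix Kronecker BigOperators
open scoped ComplexOrder

/-- The Frobenius (Hilbert–Schmidt) norm `‖A‖₂ = √Tr(AᴴA)` of a complex matrix. -/
def frobNorm {n : Type*} [Fintype n] (A : Matrix n n ℂ) : ℝ :=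
  Real.sqrt (Matrix.trace (Aᴴ * A)).re

/-- The operator norm `‖A‖_∞` (largest singular value) of a complex matrix. -/
def opNorm {n : Type*} [Fintype n] [DecidableEq n] (A : Matrix n n ℂ) : ℝ :=
  ‖Matrix.toEuclideanCLM (𝕜 := ℂ) A‖

/-- The positive semidefinite square root of a positive semidefinite matrix (Mathlib's former
`Matrix.PosSemidef.sqrt`, with its old definition). -/
def Matrix.PosSemidef.sqrt {n 𝕜 : Type*} [Fintype n] [RCLike 𝕜] [DecidableEq n]
    {A : Matrix n n 𝕜} (hA : A.PosSemidef) : Matrix n n 𝕜 :=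
  hA.1.eigenvectorUnitary.1 * diagonal ((↑) ∘ Real.sqrt ∘ hA.1.eigenvalues) *
  (star hA.1.eigenvectorUnitary : Matrix n n 𝕜)

/-- The trace norm `‖A‖₁ = Tr √(AᴴA)` of a complex matrix. -/
def traceNorm {n : Type*} [Fintype n] [DecidableEq n] (A : Matrix n n ℂ) : ℝ :=
  ((Matrix.posSemidef_conjTranspose_mul_self A).sqrt).trace.re

/-- A density matrix: positive semidefinite with trace one. -/
def IsDensity {n : Type*} [Fintype n] (ρ : Matrix n n ℂ) : Prop :=
  ρ.PosSemidef ∧ ρ.trace = 1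

/-- A density matrix `ρ` is `δ`-almost rank `r` if there is a density matrix of rank at most `r`
within operator-norm distance `δ` of it. -/
def AlmostRank {n : Type*} [Fintype n] [DecidableEq n] (r : ℕ) (δ : ℝ) (ρ : Matrix n n ℂ) : Prop :=
  ∃ σ : Matrix n n ℂ, IsDensity σ ∧ σ.rank ≤ r ∧ opNorm (ρ - σ) ≤ δ

/-- The rank-one (outer-product) matrix `|v⟩⟨v|`. -/
def outer {n : Type*} (v : EuclideanSpace ℂ n) : Matrix n n ℂ :=
  Matrix.of fun i j => v i * (starRingEnd ℂ) (v j)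

/-- Partial trace over the first tensor factor. -/
def ptrace1 {d : ℕ} (X : Matrix (Fin d × Fin d) (Fin d × Fin d) ℂ) : Matrix (Fin d) (Fin d) ℂ :=
  Matrix.of fun j j' => ∑ i, X (i, j) (i, j')

/-- Partial trace over the second tensor factor. -/
def ptrace2 {d : ℕ} (X : Matrix (Fin d × Fin d) (Fin d × Fin d) ℂ) : Matrix (Fin d) (Fin d) ℂ :=
  Matrix.of fun i i' => ∑ j, X (i, j) (i', j)

/-- A family of `m` rank-one projectors, each given by a unit vector. -/
def IsRankOneProjFamily {d m : ℕ} (P : Fin m → Matrix (Fin d) (Fin d) ℂ) : Prop :=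
  ∀ l, ∃ v : EuclideanSpace ℂ (Fin d), ‖v‖ = 1 ∧ P l = outer v

/-- Near-isotropy: `∑ l, Tr(P l · A) • P l = A + Tr(A) • 𝟙` for every `A`. -/
def NearIsotropic {d m : ℕ} (P : Fin m → Matrix (Fin d) (Fin d) ℂ) : Prop :=
  ∀ A : Matrix (Fin d) (Fin d) ℂ,
    ∑ l, Matrix.trace (P l * A) • P l = A + Matrix.trace A • (1 : Matrix (Fin d) (Fin d) ℂ)

section Helpers
open scoped Matrix.Norms.L2Operator

theorem opNorm_entry {n : ℕ} (A : Matrix (Fin n) (Fin n) ℂ) (i : Fin n) :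
    ‖A i i‖ ≤ opNorm A := by
  have h1 := l2_opNorm_mulVec A (EuclideanSpace.single i (1 : ℂ))
  have h2 := PiLp.norm_apply_le (WithLp.toLp 2 (A *ᵥ (EuclideanSpace.single i (1 : ℂ)).ofLp) :
    EuclideanSpace ℂ (Fin n)) i
  have h3 : ‖A‖ = opNorm A := rfl
  simp at h1 h2
  rw [← h3]
  exact h2.trans h1

theorem opNorm_conj {n : ℕ} (A : Matrix (Fin n) (Fin n) ℂ) (U : unitaryGroup (Fin n) ℂ) :
    opNorm (star (U : Matrix (Fin n) (Fin n) ℂ) * A * (U : Matrix (Fin n) (Fin n) ℂ)) = opNorm A := by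
  change ‖star (U : Matrix (Fin n) (Fin n) ℂ) * A * (U : Matrix (Fin n) (Fin n) ℂ)‖ = ‖A‖
  rw [CStarRing.norm_mul_coe_unitary, ← Unitary.coe_star, CStarRing.norm_coe_unitary_mul]

theorem opNorm_sub_triangle {n : ℕ} (A B C : Matrix (Fin n) (Fin n) ℂ) :
    opNorm (A - C) ≤ opNorm (A - B) + opNorm (B - C) :=
  norm_sub_le_norm_sub_add_norm_sub A B C

theorem opNorm_sub_comm {n : ℕ} (A B : Matrix (Fin n) (Fin n) ℂ) :
    opNorm (A - B) = opNorm (B - A) :=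
  norm_sub_rev A B

theorem opNorm_nonneg {n : ℕ} (A : Matrix (Fin n) (Fin n) ℂ) : 0 ≤ opNorm A :=
  norm_nonneg A

end Helpers

theorem trace_mul_sub_le {n r : ℕ} (D ρ σ : Matrix (Fin n) (Fin n) ℂ)
    (hρ : IsDensity ρ) (hσ : IsDensity σ) (hr : σ.rank ≤ r) :
    ‖(D * (ρ - σ)).trace‖ ≤ 2 * r * opNorm D * opNorm (ρ - σ) := by
  have hX : (ρ - σ).IsHermitian := hρ.1.1.sub hσ.1.1
  set U := hX.eigenvectorUnitary with hU
  set x := hX.eigenvalues with hx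
  have hdiag : star (U : Matrix (Fin n) (Fin n) ℂ) * (ρ - σ) * U
      = diagonal (fun i => (x i : ℂ)) := by
    have := hX.conjStarAlgAut_star_eigenvectorUnitary
    rw [Unitary.conjStarAlgAut_star_apply] at this
    exact this
  have hUU : (U : Matrix (Fin n) (Fin n) ℂ) * star (U : Matrix (Fin n) (Fin n) ℂ) = 1 :=
    Unitary.coe_mul_star_self U
  have hxle : ∀ i, |x i| ≤ opNorm (ρ - σ) := by
    intro i
    have := opNorm_entry (star (U : Matrix (Fin n) (Fin n) ℂ) * (ρ - σ) * (U : Matrix (Fin n) (Fin n) ℂ)) i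
    rw [opNorm_conj, hdiag] at this
    simpa using this
  have hsum : ∑ i, x i = 0 := by
    have h1 : (ρ - σ).trace = 0 := by rw [trace_sub, hρ.2, hσ.2, sub_self]
    rw [hX.trace_eq_sum_eigenvalues] at h1
    have h2 := congrArg Complex.re h1
    simpa using h2
  -- number of negative eigenvalues
  have hcard : (Finset.univ.filter (fun i => x i < 0)).card ≤ r := by
    let V : Matrix (Fin n) {i // x i < 0} ℂ :=
      (U : Matrix (Fin n) (Fin n) ℂ).submatrix id Subtype.val
    have hV : Vᴴ * (ρ - σ) * V = diagonal (fun i : {i // x i < 0} => (x i : ℂ)) := by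
      have : Vᴴ * (ρ - σ) * V =
          (star (U : Matrix (Fin n) (Fin n) ℂ) * (ρ - σ) * U).submatrix
            Subtype.val Subtype.val := by
        ext i j
        simp [V, Matrix.mul_apply, star_eq_conjTranspose]
      rw [this, hdiag]
      ext i j
      simp [diagonal_apply, Subtype.ext_iff]
    have hpd : (Vᴴ * σ * V).PosDef := by
      have e : Vᴴ * σ * V = diagonal (fun i : {i // x i < 0} => -(x i : ℂ)) + Vᴴ * ρ * V := by
        have h0 : diagonal (fun i : {i // x i < 0} => -(x i : ℂ)) = - (Vᴴ * (ρ - σ) * V) := by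
          rw [hV, ← diagonal_neg]
        rw [h0]
        rw [Matrix.mul_sub, Matrix.sub_mul]
        abel
      rw [e]
      refine PosDef.add_posSemidef (posDef_diagonal_iff.2 ?_)
        (hρ.1.conjTranspose_mul_mul_same V)
      intro i
      have := i.2
      rw [← Complex.ofReal_neg]
      exact_mod_cast neg_pos.2 this
    have h1 := rank_of_isUnit _ hpd.isUnit
    rw [← Fintype.card_subtype, ← h1]
    exact ((rank_mul_le_left _ _).trans (rank_mul_le_right _ _)).trans hr
  have habs : ∑ i, |x i| ≤ 2 * r * opNorm (ρ - σ) := by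
    have e : ∑ i, |x i| = 2 * ∑ i, (if x i < 0 then |x i| else 0) := by
      have : ∑ i, |x i| = ∑ i, (x i + 2 * (if x i < 0 then |x i| else 0)) := by
        refine Finset.sum_congr rfl fun i _ => ?_
        split_ifs with h
        · rw [abs_of_neg h]; ring
        · rw [abs_of_nonneg (not_lt.1 h)]; ring
      rw [this, Finset.sum_add_distrib, hsum, zero_add, Finset.mul_sum]
    rw [e, ← Finset.sum_filter, mul_assoc]
    have h2 := Finset.sum_le_card_nsmul (Finset.univ.filter (fun i => x i < 0))
      (fun i => |x i|) _ (fun i _ => hxle i)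
    rw [nsmul_eq_mul] at h2
    have h3 : ((Finset.univ.filter (fun i => x i < 0)).card : ℝ) ≤ r := by exact_mod_cast hcard
    have h4 := mul_le_mul_of_nonneg_right h3 (opNorm_nonneg (ρ - σ))
    linarith
  have htr : (D * (ρ - σ)).trace
      = ∑ i, (star (U : Matrix (Fin n) (Fin n) ℂ) * D * U) i i * (x i : ℂ) := by
    have e : (D * (ρ - σ)).trace = ((star (U : Matrix (Fin n) (Fin n) ℂ) * D * U) *
        (star (U : Matrix (Fin n) (Fin n) ℂ) * (ρ - σ) * U)).trace := by
      have : (star (U : Matrix (Fin n) (Fin n) ℂ) * D * U) *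
        (star (U : Matrix (Fin n) (Fin n) ℂ) * (ρ - σ) * U)
        = star (U : Matrix (Fin n) (Fin n) ℂ) * (D * ((U : Matrix (Fin n) (Fin n) ℂ) *
          star (U : Matrix (Fin n) (Fin n) ℂ)) * (ρ - σ) * U) := by
        simp only [Matrix.mul_assoc]
      rw [this, hUU, Matrix.mul_one, trace_mul_comm (star (U : Matrix (Fin n) (Fin n) ℂ)), Matrix.mul_assoc, hUU, Matrix.mul_one]
    rw [e, hdiag]
    simp [trace, mul_diagonal]
  rw [htr]
  calc _ ≤ ∑ i, ‖(star (U : Matrix (Fin n) (Fin n) ℂ) * D * U) i i * (x i : ℂ)‖ :=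
        norm_sum_le _ _
    _ ≤ ∑ i, opNorm D * |x i| := by
        refine Finset.sum_le_sum fun i _ => ?_
        rw [norm_mul, Complex.norm_real, Real.norm_eq_abs]
        refine mul_le_mul_of_nonneg_right ?_ (abs_nonneg _)
        have := opNorm_entry (star (U : Matrix (Fin n) (Fin n) ℂ) * D * (U : Matrix (Fin n) (Fin n) ℂ)) i
        rwa [opNorm_conj] at this
    _ = opNorm D * ∑ i, |x i| := by rw [Finset.mul_sum]
    _ ≤ opNorm D * (2 * r * opNorm (ρ - σ)) :=
        mul_le_mul_of_nonneg_left habs (opNorm_nonneg D)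
    _ = _ := by ring

theorem frob_bound_aux {n r : ℕ} (P Q σ : Matrix (Fin n) (Fin n) ℂ)
    (hP : IsDensity P) (hQ : IsDensity Q) (hσ : IsDensity σ) (hr : σ.rank ≤ r)
    (τ δ : ℝ) (hτ : 0 ≤ τ) (h₁ : opNorm (Q - P) ≤ 2 * τ) (h₂ : opNorm (P - σ) ≤ δ) :
    (((Q - P)ᴴ * (Q - P)).trace).re ≤ 2 * r * (δ + 2 * τ) ^ 2 := by
  have hD : (Q - P)ᴴ = Q - P := (hQ.1.1.sub hP.1.1)
  have e : ((Q - P) * (Q - P)).trace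
      = ((Q - P) * (Q - σ)).trace - ((Q - P) * (P - σ)).trace := by
    rw [← trace_sub, ← Matrix.mul_sub, sub_sub_sub_cancel_right]
  have b1 := trace_mul_sub_le (Q - P) Q σ hQ hσ hr
  have b2 := trace_mul_sub_le (Q - P) P σ hP hσ hr
  have t := opNorm_sub_triangle Q P σ
  have n0 := opNorm_nonneg (Q - P)
  have n1 := opNorm_nonneg (P - σ)
  rw [hD]
  have h := (Complex.re_le_norm ((Q - P) * (Q - P)).trace)
  have h' : ‖((Q - P) * (Q - P)).trace‖ ≤
      ‖((Q - P) * (Q - σ)).trace‖ + ‖((Q - P) * (P - σ)).trace‖ := by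
    rw [e]; exact norm_sub_le _ _
  have hδ : 0 ≤ δ := n1.trans h₂
  have hr0 : (0 : ℝ) ≤ r := Nat.cast_nonneg r
  have k : opNorm (Q - P) * (opNorm (Q - σ) + opNorm (P - σ)) ≤ 2 * τ * (2 * τ + δ + δ) :=
    mul_le_mul h₁ (by linarith) (add_nonneg (opNorm_nonneg _) n1) (by linarith)
  have k2 := mul_le_mul_of_nonneg_left k (by linarith : (0 : ℝ) ≤ 2 * r)
  have k3 : 0 ≤ 2 * (r : ℝ) * δ ^ 2 := by positivity
  have k4 : 0 ≤ (r : ℝ) * (τ * δ) := by positivity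
  nlinarith

/-- deterministic Frobenius-norm content of Theorem 4, eq. (48): if `Φ, B` are
density matrices, `‖B − Φ‖_∞ ≤ 2τ`, `‖S − Φ‖₂ ≤ ‖B − Φ‖₂`, and `Φ` or `B` is `δ`-almost rank
`r`, then `‖S − Φ‖₂² ≤ 2r(δ + 2τ)²`. -/
theorem pls_frobenius_deterministic_bound (n : ℕ)
    (Φ B S : Matrix (Fin n) (Fin n) ℂ)
    (hΦ : IsDensity Φ) (hB : IsDensity B)
    (τ δ : ℝ) (r : ℕ) (hτ : 0 ≤ τ) (hδ : 0 ≤ δ) (hr : 1 ≤ r)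
    (h₁ : opNorm (B - Φ) ≤ 2 * τ)
    (h₂ : frobNorm (S - Φ) ≤ frobNorm (B - Φ))
    (h₃ : AlmostRank r δ Φ ∨ AlmostRank r δ B) :
    frobNorm (S - Φ) ^ 2 ≤ 2 * r * (δ + 2 * τ) ^ 2 := by
  have hsq : frobNorm (B - Φ) ^ 2 ≤ 2 * r * (δ + 2 * τ) ^ 2 := by
    unfold frobNorm
    have h0 : 0 ≤ (((B - Φ)ᴴ * (B - Φ)).trace).re :=
      (Complex.le_def.1 (posSemidef_conjTranspose_mul_self (B - Φ)).trace_nonneg).1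
    rw [Real.sq_sqrt h0]
    rcases h₃ with ⟨σ, hσ, hrk, hd⟩ | ⟨σ, hσ, hrk, hd⟩
    · exact frob_bound_aux Φ B σ hΦ hB hσ hrk τ δ hτ h₁ hd
    · have := frob_bound_aux B Φ σ hB hΦ hσ hrk τ δ hτ (by rwa [opNorm_sub_comm]) hd
      rw [← neg_sub B Φ, conjTranspose_neg, neg_mul_neg] at this
      exact this
  exact (pow_le_pow_left₀ (Real.sqrt_nonneg _) h₂ 2).trans hsq
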